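/- For every integer k ≥ 3 and every δ > 0, there exist c > 0 and N₀ such that for every N ≥ N₀ and every function f : Z_N → [0,1] with E[f(x) | x ∈ Z_N] ≥ δ, one has E[f(x)·f(x+d)·f(x+2d)···f(x+(k−1)d) | x, d ∈ Z_N] ≥ c. -/

import Mathlib

/-!
The theorem is deduced from the density Hales–Jewett theorem: for every alphabet `α` and every
`δ > 0`, in some dimension `ι` every set of density `δ` of words `ι → α` contains a combinatorial
line. For finite abelian groups `G`, `H` and homomorphisms `φ j : H →+ G`, one for each letter `j`
of an alphabet `J`, map words to `G` by `w ↦ x + ∑ i, φ (w i) (r i)`, with `x` and all `r i` uniform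
and independent. The set `{f ≥ δ / 2}` pulls back to a dense set of words with positive probability,
so some fixed line lies in the pullback with probability bounded below. The image of that line is
a progression `x' + φ j d`, where `x'` is uniform and so is `d`, as a nonempty sum of the `r i`.

The density Hales–Jewett theorem is proved by induction on the alphabet, with `DHJ.option` as the
step from `α` to `Option α`. Words over `Option α` containing `none` are lines over `α`, with `none`
as the wildcard. Suppose the theorem fails for `Option α`, and let `d > 0` be the infimum of the
densities that force lines. Take a line-free set of density almost `d` in a cube of dimension
`η × Option κ ⊕ ρ`. Its slices over the words on `ρ` are line-free sets `A z` in dimension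
`η × Option κ`. A word `x` lies in `A z` for almost a proportion `d` of the `z`: the `z` with
`x ∈ A z` form a line-free set in dimension `ρ`, so no `x` has a proportion much above `d`, and
hence (there are few `x` compared with the precision) none has one much below.

Now the theorem for `α` in dimension `η`, applied to random copies of the `α`-cube, gives a fixed
line `L` over `α` whose points lie in `A z` with probability at least `θ > 0`. The random copies are
such that the point completing `L` to a line over `Option α` is uniform in a `κ`-dimensional cube
over `Option α`, once the rest is fixed. On this cube `A z` has density about `d` on average, but it
is disjoint from the set of those points for which all of `L` lies in `A z`. The latter set has
density at least `θ` on average, and is an intersection of sets `D a` that are insensitive to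
exchanging the letters `some a` and `none`.

By the multidimensional form of the theorem for `α` (`DHJ.exists_subspace_subset`), a dense
insensitive set contains large subspaces. It can therefore be almost partitioned into subspaces, and
the same follows for the complement of an intersection of insensitive sets. On a large subspace the
line-free set `A z` has density at most about `d`, hence `A z` has density at most about
`d * (1 - θ)` on average, a contradiction.
-/

open Finset

/-- The average (expectation with respect to the uniform measure) of `f` over `α`. -/
noncomputable def avg {α : Type*} [Fintype α] (f : α → ℝ) : ℝ :=
  (∑ x, f x) / (Fintype.card α)

open Combinatorics
open scoped BigOperators

noncomputable section

/-! ### Indicators and averages -/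

open Classical in
/-- The Iverson bracket of `p`: the indicator of a proposition as a real number, so that
`𝔼 x, ind (p x)` is the probability of `p`. -/
def ind (p : Prop) : ℝ := if p then 1 else 0

lemma ind_of_true {p : Prop} (h : p) : ind p = 1 := if_pos h

lemma ind_of_false {p : Prop} (h : ¬p) : ind p = 0 := if_neg h

lemma ind_nonneg (p : Prop) : 0 ≤ ind p := by unfold ind; split_ifs <;> norm_num

lemma ind_le_one (p : Prop) : ind p ≤ 1 := by unfold ind; split_ifs <;> norm_num

lemma ind_mono {p q : Prop} (h : p → q) : ind p ≤ ind q := by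
  by_cases hp : p
  · rw [ind_of_true hp, ind_of_true (h hp)]
  · rw [ind_of_false hp]
    exact ind_nonneg q

lemma ind_and (p q : Prop) : ind (p ∧ q) = ind p * ind q := by
  by_cases hp : p <;> by_cases hq : q <;> simp [ind, hp, hq]

lemma ind_not (p : Prop) : ind (¬p) = 1 - ind p := by
  by_cases hp : p <;> simp [ind, hp]

lemma ind_exists_le_sum {J : Type*} [Fintype J] (P : J → Prop) :
    ind (∃ j, P j) ≤ ∑ j, ind (P j) := by
  by_cases h : ∃ j, P j
  · obtain ⟨j, hj⟩ := h
    calc ind (∃ j, P j) ≤ ind (P j) := ind_mono fun _ => hj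
      _ ≤ ∑ j, ind (P j) := single_le_sum (fun i _ => ind_nonneg (P i)) (mem_univ j)
  · rw [ind_of_false h]
    exact sum_nonneg fun j _ => ind_nonneg (P j)

lemma pow_card_mul_ind_le_prod {J : Type*} [Fintype J] {f : J → ℝ} {ε : ℝ} (hf : ∀ j, 0 ≤ f j)
    (hε : 0 ≤ ε) : ε ^ Fintype.card J * ind (∀ j, ε ≤ f j) ≤ ∏ j, f j := by
  by_cases h : ∀ j, ε ≤ f j
  · rw [ind_of_true h, mul_one, ← card_univ, ← prod_const]
    exact prod_le_prod (fun _ _ => hε) fun j _ => h j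
  · rw [ind_of_false h, mul_zero]
    exact prod_nonneg fun j _ => hf j

section Averages

variable {J W X Y : Type*} [Fintype W] [Fintype X] [Fintype Y]

lemma avg_eq_expect (f : X → ℝ) : avg f = 𝔼 x, f x :=
  (Fintype.expect_eq_sum_div_card f).symm

lemma expect_le_of_forall_le {f : X → ℝ} {c : ℝ} (hc : 0 ≤ c) (h : ∀ x, f x ≤ c) :
    𝔼 x, f x ≤ c := by
  cases isEmpty_or_nonempty X
  · simpa using hc
  · exact expect_le univ_nonempty fun x _ => h x

lemma expect_ind_le_one (P : X → Prop) : 𝔼 x, ind (P x) ≤ 1 :=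
  expect_le_of_forall_le zero_le_one fun _ => ind_le_one _

lemma nonempty_of_pos_le_expect {f : X → ℝ} {ε : ℝ} (hε : 0 < ε) (h : ε ≤ 𝔼 x, f x) :
    Nonempty X := by
  by_contra hX
  have := not_nonempty_iff.1 hX
  simp only [univ_eq_empty, expect_empty] at h
  linarith

lemma expect_comp_equiv_fst {Z : Type*} [Finite Z] [Nonempty Z] (e : W ≃ X × Z) (f : X → ℝ) :
    𝔼 w, f (e w).1 = 𝔼 x, f x := by
  have := Fintype.ofFinite Z
  rw [Fintype.expect_equiv e (fun w => f (e w).1) (fun p => f p.1) fun _ => rfl,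
    ← univ_product_univ, expect_product' univ univ fun x _ => f x]
  simp only [Fintype.expect_const]

/-- Resampling: an involution of `X × Y` turns `x` and an independent `y` into a new uniform
element of `X`. -/
lemma expect_expect_involutive_fst [Nonempty Y] {s : X × Y → X × Y} (hs : s.Involutive)
    (f : X → ℝ) : 𝔼 x, 𝔼 y, f (s (x, y)).1 = 𝔼 x, f x := by
  rw [← expect_comp_equiv_fst hs.toPerm f, ← univ_product_univ, expect_product]
  rfl

lemma expect_update {ι : Type*} [Fintype ι] [DecidableEq ι] [Nonempty Y] (i : ι)
    (f : (ι → Y) → ℝ) : 𝔼 u, 𝔼 y, f (Function.update u i y) = 𝔼 u, f u :=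
  expect_expect_involutive_fst
    (s := fun p : (ι → Y) × Y => (Function.update p.1 i p.2, p.1 i)) (fun p => by simp) f

lemma expect_eval {ι : Type*} [Fintype ι] [DecidableEq ι] [Nonempty Y] (i : ι) (f : Y → ℝ) :
    𝔼 u : ι → Y, f (u i) = 𝔼 y, f y :=
  expect_comp_equiv_fst (Equiv.funSplitAt i Y) f

lemma expect_sumElim {ι κ β : Type*} [Fintype ι] [DecidableEq ι] [Fintype κ] [DecidableEq κ]
    [Fintype β] (f : (ι ⊕ κ → β) → ℝ) :
    𝔼 x, f x = 𝔼 z : κ → β, 𝔼 y : ι → β, f (Sum.elim y z) := by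
  rw [expect_comm, Fintype.expect_equiv (Equiv.sumArrowEquivProdArrow ι κ β) f
    (fun p => f (Sum.elim p.1 p.2)) fun x => by simp [Equiv.sumArrowEquivProdArrow],
    ← univ_product_univ, expect_product]

lemma expect_mul_ind_range {φ : X → Y} (hφ : Function.Injective φ) (g : Y → ℝ) :
    𝔼 y, g y * ind (y ∈ Set.range φ) =
      Fintype.card X / Fintype.card Y * 𝔼 x, g (φ x) := by
  have hsum : ∑ x, g (φ x) = ∑ y, g y * ind (y ∈ Set.range φ) :=
    Fintype.sum_of_injective φ hφ _ _ (fun y hy => by rw [ind_of_false hy, mul_zero])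
      fun x => by rw [ind_of_true (Set.mem_range_self x), mul_one]
  rw [Fintype.expect_eq_sum_div_card, ← hsum, ← Fintype.card_mul_expect]
  ring

lemma expect_ind_eq (y : Y) : 𝔼 x, ind (x = y) = 1 / Fintype.card Y := by
  simpa [eq_comm] using
    expect_mul_ind_range (φ := fun _ : Unit => y) (Function.injective_of_subsingleton _) 1

lemma expect_ind_exists_eq_le {ι : Type*} [Fintype ι] [DecidableEq ι] (y : Y) :
    𝔼 u : ι → Y, ind (∃ i, u i = y) ≤ Fintype.card ι / Fintype.card Y := by
  have : Nonempty Y := ⟨y⟩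
  calc 𝔼 u : ι → Y, ind (∃ i, u i = y) ≤ 𝔼 u : ι → Y, ∑ i, ind (u i = y) :=
        expect_le_expect fun u _ => ind_exists_le_sum _
    _ = ∑ i : ι, 𝔼 u : ι → Y, ind (u i = y) := expect_sum_comm ..
    _ = ∑ _i : ι, (1 / Fintype.card Y : ℝ) :=
        sum_congr rfl fun i _ => by rw [expect_eval i fun v => ind (v = y), expect_ind_eq]
    _ = Fintype.card ι / Fintype.card Y := by simp [div_eq_mul_inv]

lemma half_le_expect_ind {f : X → ℝ} {ε : ℝ} (hf : ∀ x, f x ≤ 1) (hε : 0 ≤ ε)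
    (h : ε ≤ 𝔼 x, f x) : ε / 2 ≤ 𝔼 x, ind (ε / 2 ≤ f x) := by
  have hpoint : ∀ x, f x ≤ ind (ε / 2 ≤ f x) + ε / 2 := fun x => by
    by_cases hx : ε / 2 ≤ f x
    · rw [ind_of_true hx]
      linarith [hf x]
    · rw [ind_of_false hx]
      linarith
  have hmean : 𝔼 x, f x ≤ 𝔼 x, ind (ε / 2 ≤ f x) + 𝔼 _x : X, ε / 2 :=
    (expect_le_expect fun x _ => hpoint x).trans_eq (expect_add_distrib ..)
  linarith [expect_le_of_forall_le (X := X) (div_nonneg hε two_pos.le) fun _ => le_rfl]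

lemma exists_div_le_expect_ind [Finite J] {P : J → X → Prop} {ε : ℝ} (hε : 0 < ε)
    (h : ε ≤ 𝔼 x, ind (∃ j, P j x)) : ∃ j, ε / (Nat.card J + 1) ≤ 𝔼 x, ind (P j x) := by
  have := Fintype.ofFinite J
  by_contra! hlt
  have hbound : ε ≤ Nat.card J * (ε / (Nat.card J + 1)) :=
    calc ε ≤ 𝔼 x, ∑ j, ind (P j x) :=
          h.trans (expect_le_expect fun x _ => ind_exists_le_sum _)
      _ = ∑ j, 𝔼 x, ind (P j x) := expect_sum_comm ..
      _ ≤ ∑ _j : J, ε / (Nat.card J + 1) := sum_le_sum fun j _ => (hlt j).le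
      _ = Nat.card J * (ε / (Nat.card J + 1)) := by simp
  rw [← mul_div_assoc, le_div_iff₀ (by positivity)] at hbound
  linarith

lemma exists_not_and_half_le_expect_ind {P : X → Prop} {Q : X → Y → Prop} {ε : ℝ}
    (hε : 0 < ε) (hP : 𝔼 x, ind (P x) < ε / 2) (hQ : ε ≤ 𝔼 x, 𝔼 y, ind (Q x y)) :
    ∃ x, ¬P x ∧ ε / 2 ≤ 𝔼 y, ind (Q x y) := by
  by_contra! hlt
  have hmean : 𝔼 x, 𝔼 y, ind (Q x y) ≤ 𝔼 x, ind (P x) + 𝔼 _x : X, ε / 2 := by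
    rw [← expect_add_distrib]
    refine expect_le_expect fun x _ => ?_
    by_cases hx : P x
    · rw [ind_of_true hx]
      linarith [expect_ind_le_one (Q x)]
    · linarith [hlt x hx, ind_nonneg (P x)]
  linarith [expect_le_of_forall_le (X := X) (half_pos hε).le fun _ => le_rfl]

lemma exists_le_expect_ind_subset {Z : Type*} [Fintype Z] [Finite J] {S : J → Set X}
    {A : Z → Set X} {ε : ℝ} (hε : 0 < ε) (hA : ε ≤ 𝔼 z, 𝔼 x, ind (x ∈ A z))
    (hS : ∀ z, ε / 2 ≤ 𝔼 x, ind (x ∈ A z) → ∃ j, S j ⊆ A z) :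
    ∃ j, ε / 2 / (Nat.card J + 1) ≤ 𝔼 z, ind (S j ⊆ A z) := by
  refine exists_div_le_expect_ind (half_pos hε) ?_
  calc ε / 2 ≤ 𝔼 z, ind (ε / 2 ≤ 𝔼 x, ind (x ∈ A z)) :=
        half_le_expect_ind (fun z => expect_ind_le_one _) hε.le hA
    _ ≤ 𝔼 z, ind (∃ j, S j ⊆ A z) := expect_le_expect fun z _ => ind_mono (hS z)

/-- A single point accounts for a proportion `1 / |X|` of the average. -/
lemma sub_card_mul_le_of_le_expect {f : X → ℝ} {m M : ℝ} (hM : ∀ x, f x ≤ M)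
    (hm : m ≤ 𝔼 x, f x) (x : X) : M - Fintype.card X * (M - m) ≤ f x := by
  have : Nonempty X := ⟨x⟩
  have hsingle : M - f x ≤ ∑ y, (M - f y) :=
    single_le_sum (f := fun y => M - f y) (fun y _ => sub_nonneg.2 (hM y)) (mem_univ x)
  have hsum : ∑ y, (M - f y) = Fintype.card X * (M - 𝔼 y, f y) := by
    rw [← Fintype.card_mul_expect, expect_sub_distrib, Fintype.expect_const]
  have := mul_le_mul_of_nonneg_left (sub_le_sub_left hm M) (Nat.cast_nonneg (Fintype.card X))
  linarith

end Averages

/-! ### Combinatorial subspaces -/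

section Subspaces

variable {η ζ ι κ β : Type*}

instance [Finite η] [Finite β] [Finite ι] : Finite (Subspace η β ι) :=
  Finite.of_injective Subspace.idxFun fun _ _ h => Subspace.ext h

instance [Finite β] [Finite ι] : Finite (Line β ι) :=
  Finite.of_injective Line.idxFun fun _ _ h => Line.ext h

lemma subspace_injective (V : Subspace η β ι) : Function.Injective (V : (η → β) → ι → β) := by
  intro x y h
  funext e
  obtain ⟨i, hi⟩ := V.proper e
  simpa only [Subspace.apply_inr hi] using congrFun h i

/-- The composition of the embeddings of two combinatorial subspaces. -/
def subspaceComp (V : Subspace η β ι) (W : Subspace ζ β η) : Subspace ζ β ι where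
  idxFun i := (V.idxFun i).elim Sum.inl W.idxFun
  proper e := by
    obtain ⟨j, hj⟩ := W.proper e
    obtain ⟨i, hi⟩ := V.proper j
    exact ⟨i, by simp [hi, hj]⟩

lemma subspaceComp_apply (V : Subspace η β ι) (W : Subspace ζ β η) (x : ζ → β) :
    subspaceComp V W x = V (W x) := by
  funext i
  cases h : V.idxFun i <;> simp [subspaceComp, Subspace.coe_apply, h]

/-- The image of a combinatorial line under the embedding of a combinatorial subspace. -/
def lineInSubspace (V : Subspace η β ι) (l : Line β η) : Line β ι where
  idxFun i := (V.idxFun i).elim some l.idxFun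
  proper := by
    obtain ⟨j, hj⟩ := l.proper
    obtain ⟨i, hi⟩ := V.proper j
    exact ⟨i, by simp [hi, hj]⟩

lemma lineInSubspace_apply (V : Subspace η β ι) (l : Line β η) (b : β) :
    lineInSubspace V l b = V (l b) := by
  funext i
  cases h : V.idxFun i <;> simp [lineInSubspace, Subspace.coe_apply, h]

/-- A subspace in the left coordinates of a sum, the right coordinates being fixed. -/
def subspaceInl (V : Subspace η β ι) (z : κ → β) : Subspace η β (ι ⊕ κ) where
  idxFun := Sum.elim V.idxFun fun j => Sum.inl (z j)
  proper e := let ⟨i, hi⟩ := V.proper e; ⟨Sum.inl i, hi⟩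

lemma subspaceInl_apply (V : Subspace η β ι) (z : κ → β) (x : η → β) :
    subspaceInl V z x = Sum.elim (V x) z := by
  funext i
  cases i <;> rfl

/-- A subspace in the right coordinates of a sum, the left coordinates being fixed. -/
def subspaceInr (y : ι → β) (V : Subspace η β κ) : Subspace η β (ι ⊕ κ) where
  idxFun := Sum.elim (fun i => Sum.inl (y i)) V.idxFun
  proper e := let ⟨j, hj⟩ := V.proper e; ⟨Sum.inr j, hj⟩

lemma subspaceInr_apply (y : ι → β) (V : Subspace η β κ) (x : η → β) :
    subspaceInr y V x = Sum.elim y (V x) := by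
  funext i
  cases i <;> rfl

/-- The product of a subspace and a line; the direction of the line is indexed by `none`. -/
def subspaceProdLine (V : Subspace η β ι) (l : Line β κ) : Subspace (Option η) β (ι ⊕ κ) where
  idxFun := Sum.elim (fun i => (V.idxFun i).map id some)
    fun j => (l.idxFun j).elim (Sum.inr none) Sum.inl
  proper e := by
    cases e with
    | none =>
      obtain ⟨j, hj⟩ := l.proper
      exact ⟨Sum.inr j, by simp [hj]⟩
    | some e =>
      obtain ⟨i, hi⟩ := V.proper e
      exact ⟨Sum.inl i, by simp [hi]⟩

lemma subspaceProdLine_apply (V : Subspace η β ι) (l : Line β κ) (x : Option η → β) :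
    subspaceProdLine V l x = Sum.elim (V fun e => x (some e)) (l (x none)) := by
  funext i
  cases i with
  | inl i => cases h : V.idxFun i <;> simp [subspaceProdLine, Subspace.coe_apply, h]
  | inr j => cases h : l.idxFun j <;> simp [subspaceProdLine, Subspace.coe_apply, h]

end Subspaces

/-! ### The density Hales–Jewett property -/

universe u v

section DensityHalesJewett

/-- In some finite dimension, every set of words over the alphabet `β` of density at least `δ`
contains a combinatorial line. -/
def HJDensity (β : Type u) [Fintype β] (δ : ℝ) : Prop :=
  ∃ (ι : Type) (_ : Fintype ι) (_ : DecidableEq ι), ∀ A : Set (ι → β),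
    δ ≤ 𝔼 x, ind (x ∈ A) → ∃ l : Line β ι, Set.range l ⊆ A

/-- The density Hales–Jewett theorem for the alphabet `β`. -/
def DHJ (β : Type u) [Fintype β] : Prop := ∀ δ : ℝ, 0 < δ → HJDensity β δ

lemma nonempty_of_pos_le_expect_ind {X : Type*} [Fintype X] {A : Set X} {δ : ℝ} (hδ : 0 < δ)
    (hA : δ ≤ 𝔼 x, ind (x ∈ A)) : A.Nonempty := by
  have : Nonempty X := nonempty_of_pos_le_expect hδ hA
  obtain ⟨x, -, hx⟩ := exists_le_of_le_expect univ_nonempty hA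
  by_contra hne
  rw [ind_of_false fun h => hne ⟨x, h⟩] at hx
  linarith

lemma HJDensity.mono {β : Type u} [Fintype β] {δ δ' : ℝ} (h : HJDensity β δ) (hδ : δ ≤ δ') :
    HJDensity β δ' := by
  obtain ⟨ι, _, _, hι⟩ := h
  exact ⟨ι, _, _, fun A hA => hι A (hδ.trans hA)⟩

lemma hjDensity_of_one_lt {β : Type u} [Fintype β] {δ : ℝ} (hδ : 1 < δ) : HJDensity β δ :=
  ⟨Unit, inferInstance, inferInstance, fun _ hA =>
    absurd (hδ.trans_le hA) (expect_ind_le_one _).not_gt⟩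

lemma dhj_of_subsingleton {β : Type u} [Fintype β] [Subsingleton β] : DHJ β := by
  refine fun δ hδ => ⟨Unit, inferInstance, inferInstance, fun A hA => ?_⟩
  obtain ⟨x, hx⟩ := nonempty_of_pos_le_expect_ind hδ hA
  exact ⟨default, Set.range_subset_iff.2 fun b => by rwa [Subsingleton.elim (Line.toFun _ b) x]⟩

lemma DHJ.congr {β : Type u} {γ : Type v} [Fintype β] [Fintype γ] (e : β ≃ γ) (hβ : DHJ β) :
    DHJ γ := by
  intro δ hδ
  obtain ⟨ι, _, _, hι⟩ := hβ δ hδ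
  refine ⟨ι, inferInstance, inferInstance, fun A hA => ?_⟩
  have hdens : 𝔼 x, ind (x ∈ A) = 𝔼 x : ι → β, ind (e ∘ x ∈ A) :=
    (Fintype.expect_equiv ((Equiv.refl ι).arrowCongr e) _ _ fun _ => rfl).symm
  obtain ⟨l, hl⟩ := hι {x | e ∘ x ∈ A} (hA.trans_eq hdens)
  refine ⟨l.map e, Set.range_subset_iff.2 fun c => ?_⟩
  obtain ⟨b, rfl⟩ := e.surjective c
  rw [Line.map_apply]
  exact hl (Set.mem_range_self b)

lemma DHJ.exists_subspace_subset {α : Type u} [Fintype α] (hα : DHJ α) (η : Type) [Finite η] :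
    ∀ δ : ℝ, 0 < δ → ∃ (ι : Type) (_ : Fintype ι) (_ : DecidableEq ι), ∀ A : Set (ι → α),
      δ ≤ 𝔼 x, ind (x ∈ A) → ∃ V : Subspace η α ι, Set.range V ⊆ A := by
  induction η using Finite.induction_empty_option with
  | of_equiv e ih =>
    intro δ hδ
    obtain ⟨ι, _, _, hι⟩ := ih δ hδ
    refine ⟨ι, inferInstance, inferInstance, fun A hA => ?_⟩
    obtain ⟨V, hV⟩ := hι A hA
    refine ⟨V.reindex e (Equiv.refl α) (Equiv.refl ι), Set.range_subset_iff.2 fun x => ?_⟩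
    convert hV (Set.mem_range_self (x ∘ e)) using 1
    funext i
    simp
  | h_empty =>
    refine fun δ hδ => ⟨PEmpty, inferInstance, inferInstance, fun A hA => ?_⟩
    obtain ⟨x, hx⟩ := nonempty_of_pos_le_expect_ind hδ hA
    exact ⟨⟨PEmpty.elim, fun e => e.elim⟩,
      Set.range_subset_iff.2 fun y => by rwa [Subsingleton.elim (Subspace.toFun _ y) x]⟩
  | @h_option η _ ih =>
    intro δ hδ
    obtain ⟨ι, _, _, hι⟩ := ih (δ / 2) (half_pos hδ)
    obtain ⟨κ, _, _, hκ⟩ := hα (δ / 2 / (Nat.card (Subspace η α ι) + 1)) (by positivity)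
    refine ⟨ι ⊕ κ, inferInstance, inferInstance, fun A hA => ?_⟩
    rw [expect_sumElim] at hA
    obtain ⟨V, hV⟩ := exists_le_expect_ind_subset (S := fun V : Subspace η α ι => Set.range V)
      (A := fun z => {y | Sum.elim y z ∈ A}) hδ hA fun z => hι _
    obtain ⟨l, hl⟩ := hκ {z | Set.range V ⊆ {y | Sum.elim y z ∈ A}} hV
    refine ⟨subspaceProdLine V l, Set.range_subset_iff.2 fun x => ?_⟩
    rw [subspaceProdLine_apply]
    exact hl (Set.mem_range_self _) (Set.mem_range_self _)

end DensityHalesJewett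

/-! ### Insensitive sets -/

section Insensitive

/-- A set of words over `Option α` is `a`-insensitive if membership is unaffected by exchanging the
letters `some a` and `none`. This is encoded as depending only on the word obtained by replacing
`none` by `some a`. -/
def Insensitive {α ι : Type*} (a : α) (D : Set (ι → Option α)) : Prop :=
  ∀ x y : ι → Option α, (∀ i, (x i).getD a = (y i).getD a) → x ∈ D → y ∈ D

namespace Insensitive

variable {α ι η : Type*} {a : α} {D : Set (ι → Option α)}

lemma compl (h : Insensitive a D) : Insensitive a Dᶜ :=
  fun x y hxy hx hy => hx (h y x (fun i => (hxy i).symm) hy)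

lemma comp_subspace (h : Insensitive a D) (V : Subspace η (Option α) ι) :
    Insensitive a {x | V x ∈ D} := by
  refine fun x y hxy => h _ _ fun i => ?_
  cases hi : V.idxFun i <;> simp [Subspace.coe_apply, hi, hxy]

variable {κ : Type*} {E : Set (ι ⊕ κ → Option α)}

lemma sumElim_left (h : Insensitive a E) (z : κ → Option α) :
    Insensitive a {y : ι → Option α | Sum.elim y z ∈ E} := by
  refine fun x y hxy => h _ _ ?_
  rintro (i | j) <;> simp [hxy]

lemma sumElim_right (h : Insensitive a E) (y : ι → Option α) :
    Insensitive a {z : κ → Option α | Sum.elim y z ∈ E} := by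
  refine fun z w hzw => h _ _ ?_
  rintro (i | j) <;> simp [hzw]

end Insensitive

section Refill

variable {κ α : Type*} [Nonempty κ]

/-- A position at which the word `v` has a letter other than `none`, if there is one. It depends
only on the set of these positions, hence is not affected by `refill`. -/
def letterPos (v : κ → Option α) : κ := Classical.epsilon fun j => v j ≠ none

lemma apply_letterPos_eq_none_iff {v : κ → Option α} :
    v (letterPos v) = none ↔ ∀ j, v j = none := by
  refine ⟨fun h j => ?_, fun h => h _⟩
  by_contra hj
  exact Classical.epsilon_spec (p := fun j => v j ≠ none) ⟨j, hj⟩ h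

variable [DecidableEq κ]

/-- The word `v` with its letter at `letterPos v` replaced by `b`, unless `v` has no letters other
than `none`. -/
def refill (v : κ → Option α) (b : α) : κ → Option α :=
  Function.update v (letterPos v) ((v (letterPos v)).map fun _ => b)

lemma refill_eq_none_iff {v : κ → Option α} {b : α} {j : κ} : refill v b j = none ↔ v j = none := by
  by_cases hj : j = letterPos v
  · simp [refill, hj]
  · simp [refill, hj]

lemma letterPos_refill (v : κ → Option α) (b : α) : letterPos (refill v b) = letterPos v := by
  simp only [letterPos, ne_eq, refill_eq_none_iff]

lemma refill_refill (v : κ → Option α) (b : α) :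
    refill (refill v b) ((v (letterPos v)).getD b) = v := by
  rw [refill, letterPos_refill]
  funext j
  by_cases hj : j = letterPos v
  · cases h : v (letterPos v) <;> simp [refill, hj, h]
  · simp [refill, hj]

lemma getD_refill_letterPos (v : κ → Option α) (b : α) :
    (refill v b (letterPos v)).getD ((v (letterPos v)).getD b) = b := by
  cases h : v (letterPos v) <;> simp [refill, h]

lemma expect_refill {ι : Type*} [Fintype ι] [DecidableEq ι] [Fintype κ] [Fintype α] [Nonempty α]
    (F : (ι → κ → Option α) → ℝ) :
    𝔼 u : ι → κ → Option α, 𝔼 w : ι → α, F (fun i => refill (u i) (w i)) = 𝔼 u, F u := by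
  refine expect_expect_involutive_fst (s := fun p : (ι → κ → Option α) × (ι → α) =>
    (fun i => refill (p.1 i) (p.2 i), fun i => (p.1 i (letterPos (p.1 i))).getD (p.2 i)))
    (fun p => Prod.ext (funext fun i => refill_refill _ _) (funext fun i => ?_)) F
  simp only [letterPos_refill]
  exact getD_refill_letterPos _ _

/-- The subspace of `ι × κ → Option α` given by `V`, of whose coordinates the `i`-th one is placed
at the refilled position of the block `u i`. -/
def refillSubspace {η ι : Type*} (u : ι → κ → Option α) (V : Subspace η α ι) :
    Subspace η (Option α) (ι × κ) where
  idxFun p := if p.2 = letterPos (u p.1) then (V.idxFun p.1).map some id else Sum.inl (u p.1 p.2)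
  proper e := by
    obtain ⟨i, hi⟩ := V.proper e
    exact ⟨(i, letterPos (u i)), by simp [hi]⟩

lemma getD_refillSubspace_apply {η ι : Type*} {u : ι → κ → Option α} {i : ι}
    (hu : ∃ j, u i j ≠ none) (V : Subspace η α ι) (x : η → Option α) (a : α) (j : κ) :
    (refillSubspace u V x (i, j)).getD a =
      (refill (u i) (V (fun e => (x e).getD a) i) j).getD a := by
  by_cases hj : j = letterPos (u i)
  · obtain ⟨b, hb⟩ := Option.ne_none_iff_exists'.1
      (mt apply_letterPos_eq_none_iff.1 (not_forall.2 hu))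
    cases hi : V.idxFun i <;> simp [refillSubspace, refill, hj, hb, Subspace.coe_apply, hi]
  · simp [refillSubspace, refill, hj, Subspace.coe_apply]

end Refill

variable {α : Type u} [Fintype α]

lemma exists_card_div_card_pow_lt [Nonempty α] (ι : Type) [Fintype ι] {ε : ℝ} (hε : 0 < ε) :
    ∃ n : ℕ, (Fintype.card ι : ℝ) / Fintype.card (Fin (n + 1) → Option α) < ε := by
  have htwo : (1 : ℝ) < Fintype.card (Option α) := by
    rw [Fintype.card_option]
    exact_mod_cast Nat.succ_lt_succ Fintype.card_pos
  obtain ⟨n, hn⟩ := pow_unbounded_of_one_lt (Fintype.card ι / ε) htwo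
  refine ⟨n, ?_⟩
  rw [Fintype.card_fun, Fintype.card_fin, Nat.cast_pow, div_lt_comm₀ (by positivity) hε]
  exact hn.trans_le (pow_le_pow_right₀ htwo.le n.le_succ)

/-- The uniform measure on words over `Option α` is not uniform on words over `α`. Coordinates are
therefore grouped in blocks, and the letter at one position of each block is resampled from `α`;
blocks without such a position are rare. -/
lemma DHJ.exists_subspace_subset_of_insensitive (hα : DHJ α) (a : α) (η : Type) [Finite η] {ε : ℝ}
    (hε : 0 < ε) : ∃ (ι : Type) (_ : Fintype ι) (_ : DecidableEq ι), ∀ D : Set (ι → Option α),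
      Insensitive a D → ε ≤ 𝔼 x, ind (x ∈ D) →
      ∃ V : Subspace η (Option α) ι, Set.range V ⊆ D := by
  have : Nonempty α := ⟨a⟩
  obtain ⟨ι, _, _, hι⟩ := hα.exists_subspace_subset η (ε / 2) (half_pos hε)
  obtain ⟨n, hn⟩ := exists_card_div_card_pow_lt (α := α) ι (half_pos hε)
  refine ⟨ι × Fin (n + 1), inferInstance, inferInstance, fun D hD hdens => ?_⟩
  have hcurry : 𝔼 x, ind (x ∈ D) =
      𝔼 u : ι → Fin (n + 1) → Option α, ind (Function.uncurry u ∈ D) :=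
    Fintype.expect_equiv (Equiv.curry ι (Fin (n + 1)) (Option α)) _ _ fun _ => rfl
  rw [hcurry, ← expect_refill] at hdens
  obtain ⟨u, hu, hdens⟩ := exists_not_and_half_le_expect_ind hε
    ((expect_ind_exists_eq_le fun _ => none).trans_lt hn) hdens
  obtain ⟨V, hV⟩ := hι {w | Function.uncurry (fun i => refill (u i) (w i)) ∈ D} hdens
  refine ⟨refillSubspace u V, Set.range_subset_iff.2 fun x => ?_⟩
  refine hD _ _ (fun p => ?_) (hV (Set.mem_range_self fun e => (x e).getD a))
  exact (getD_refillSubspace_apply (Function.ne_iff.1 fun h => hu ⟨p.1, h⟩) V x a p.2).symm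

end Insensitive

/-! ### Functions with nonpositive averages on subspaces -/

section Exhaustion

section NonposOnSubspaces

variable {η : Type} [Fintype η] [DecidableEq η] {ι κ β : Type*} [Fintype β]

/-- The average of `g` on each combinatorial subspace with directions indexed by `η` is nonpositive.
In the application `g` is the indicator of a line-free set minus a density that forces lines. -/
def NonposOnSubspaces (η : Type) [Fintype η] [DecidableEq η] (g : (ι → β) → ℝ) : Prop :=
  ∀ V : Subspace η β ι, 𝔼 x, g (V x) ≤ 0

namespace NonposOnSubspaces

lemma comp_subspace {g : (ι → β) → ℝ} (hg : NonposOnSubspaces η g) (W : Subspace κ β ι) :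
    NonposOnSubspaces η fun x => g (W x) := by
  intro V
  simpa only [subspaceComp_apply] using hg (subspaceComp W V)

variable {g : (ι ⊕ κ → β) → ℝ}

lemma sumElim_right (hg : NonposOnSubspaces η g) (y : ι → β) :
    NonposOnSubspaces η fun z : κ → β => g (Sum.elim y z) := by
  intro V
  simpa only [subspaceInr_apply] using hg (subspaceInr y V)

lemma expect_mul_ind_range_nonpos [Fintype ι] [DecidableEq ι] (hg : NonposOnSubspaces η g)
    (V : Subspace η β ι) (z : κ → β) :
    𝔼 y, g (Sum.elim y z) * ind (y ∈ Set.range V) ≤ 0 := by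
  rw [expect_mul_ind_range (subspace_injective V) fun y => g (Sum.elim y z)]
  refine mul_nonpos_of_nonneg_of_nonpos (by positivity) ?_
  simpa only [subspaceInl_apply] using hg (subspaceInl V z)

end NonposOnSubspaces

end NonposOnSubspaces

section Remainder

variable {ι κ β : Type*}

/-- The slice at `y` of what is left of `D` after the removal of the product `B × Z`. -/
def remainder (D : Set (ι ⊕ κ → β)) (B : Set (ι → β)) (Z : Set (κ → β)) (y : ι → β) :
    Set (κ → β) :=
  {z | Sum.elim y z ∈ D ∧ ¬(y ∈ B ∧ z ∈ Z)}

lemma ind_sumElim_mem_eq_add_remainder {D : Set (ι ⊕ κ → β)} {B : Set (ι → β)} {Z : Set (κ → β)}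
    (h : ∀ y ∈ B, ∀ z ∈ Z, Sum.elim y z ∈ D) (y : ι → β) (z : κ → β) :
    ind (Sum.elim y z ∈ D) = ind (y ∈ B) * ind (z ∈ Z) + ind (z ∈ remainder D B Z y) := by
  rw [← ind_and]
  by_cases hyz : y ∈ B ∧ z ∈ Z
  · rw [ind_of_true (h y hyz.1 z hyz.2), ind_of_true hyz, ind_of_false fun hz => hz.2 hyz, add_zero]
  · rw [ind_of_false hyz, zero_add, remainder, Set.mem_ofPred_eq, ind_and, ind_of_true hyz, mul_one]

lemma expect_mul_ind_eq_add_remainder [Fintype ι] [DecidableEq ι] [Fintype κ] [DecidableEq κ]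
    [Fintype β] {D : Set (ι ⊕ κ → β)} {B : Set (ι → β)} {Z : Set (κ → β)}
    (h : ∀ y ∈ B, ∀ z ∈ Z, Sum.elim y z ∈ D) (g : (ι ⊕ κ → β) → ℝ) :
    𝔼 x, g x * ind (x ∈ D) =
      𝔼 z, (𝔼 y, g (Sum.elim y z) * ind (y ∈ B)) * ind (z ∈ Z) +
      𝔼 y, 𝔼 z, g (Sum.elim y z) * ind (z ∈ remainder D B Z y) := by
  rw [expect_sumElim, expect_comm univ univ fun y z =>
    g (Sum.elim y z) * ind (z ∈ remainder D B Z y), ← expect_add_distrib]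
  refine expect_congr rfl fun z _ => ?_
  rw [expect_mul, ← expect_add_distrib]
  refine expect_congr rfl fun y _ => ?_
  rw [ind_sumElim_mem_eq_add_remainder h]
  ring

lemma Insensitive.remainder {α : Type*} {a : α} {D : Set (ι ⊕ κ → Option α)}
    {Z : Set (κ → Option α)} (hD : Insensitive a D) (hZ : Insensitive a Z)
    (B : Set (ι → Option α)) (y : ι → Option α) : Insensitive a (remainder D B Z y) :=
  fun z w hzw hz => ⟨hD.sumElim_right y z w hzw hz.1,
    fun h => hz.2 ⟨h.1, hZ w z (fun j => (hzw j).symm) h.2⟩⟩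

end Remainder

variable {α : Type u} [Fintype α]

/-- Functions `g ≤ 1` with nonpositive averages on subspaces with directions `η` have an average on
each `a`-insensitive set `D` of at most `ε` plus `s` times the density of `D`. This measures how far
the exhaustion of `D` by subspaces has got: for `s = 1` it is trivial, and each subspace that is
split off decreases `s` by a factor. -/
def InsensitiveBound (a : α) (η ι : Type) [Fintype η] [DecidableEq η] [Fintype ι] [DecidableEq ι]
    (ε s : ℝ) : Prop :=
  ∀ g : (ι → Option α) → ℝ, (∀ x, g x ≤ 1) → NonposOnSubspaces η g →
    ∀ D : Set (ι → Option α), Insensitive a D →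
      𝔼 x, g x * ind (x ∈ D) ≤ ε + s * 𝔼 x, ind (x ∈ D)

variable {a : α} {η : Type} [Fintype η] [DecidableEq η]

lemma expect_mul_ind_le_expect_ind {X : Type*} [Fintype X] {g : X → ℝ} (hg : ∀ x, g x ≤ 1)
    (D : Set X) : 𝔼 x, g x * ind (x ∈ D) ≤ 𝔼 x, ind (x ∈ D) :=
  expect_le_expect fun x _ => mul_le_of_le_one_left (ind_nonneg _) (hg x)

lemma insensitiveBound_one {ε : ℝ} (hε : 0 ≤ ε) (ι : Type) [Fintype ι] [DecidableEq ι] :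
    InsensitiveBound a η ι ε 1 := by
  intro g hg _ D _
  linarith [expect_mul_ind_le_expect_ind hg D]

variable {ι κ : Type} [Fintype ι] [DecidableEq ι] [Fintype κ] [DecidableEq κ] {ε s : ℝ}

/-- The density of the product of a subspace and a set of density `ε / 2 / (N + 1)`, where `N` is
the number of subspaces. -/
def exhaustionRate (α : Type u) [Fintype α] (η ι : Type) [Fintype η] [DecidableEq η] [Fintype ι]
    [DecidableEq ι] (ε : ℝ) : ℝ :=
  Fintype.card (η → Option α) / Fintype.card (ι → Option α) *
    (ε / 2 / (Nat.card (Subspace η (Option α) ι) + 1))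

lemma exists_subspace_remainder (hε : 0 < ε)
    (hι : ∀ D : Set (ι → Option α), Insensitive a D → ε / 2 ≤ 𝔼 x, ind (x ∈ D) →
      ∃ V : Subspace η (Option α) ι, Set.range V ⊆ D)
    {D : Set (ι ⊕ κ → Option α)} (hD : Insensitive a D) (hdens : ε ≤ 𝔼 x, ind (x ∈ D)) :
    ∃ (V : Subspace η (Option α) ι) (Z : Set (κ → Option α)), Insensitive a Z ∧
      (∀ y ∈ Set.range V, ∀ z ∈ Z, Sum.elim y z ∈ D) ∧
      𝔼 y, 𝔼 z, ind (z ∈ remainder D (Set.range V) Z y) ≤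
        𝔼 x, ind (x ∈ D) - exhaustionRate α η ι ε := by
  obtain ⟨V, hV⟩ := exists_le_expect_ind_subset
    (S := fun V : Subspace η (Option α) ι => Set.range V)
    (A := fun z => {y | Sum.elim y z ∈ D}) hε (hdens.trans_eq (expect_sumElim _))
    fun z => hι _ (hD.sumElim_left z)
  set Z : Set (κ → Option α) := {z | Set.range V ⊆ {y | Sum.elim y z ∈ D}}
  have hZ : Insensitive a Z := fun z w hzw hz y hy => hD.sumElim_right y z w hzw (hz hy)
  have hVZ : ∀ y ∈ Set.range V, ∀ z ∈ Z, Sum.elim y z ∈ D := fun y hy z hz => hz hy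
  refine ⟨V, Z, hZ, hVZ, ?_⟩
  have hrange : 𝔼 y, ind (y ∈ Set.range V) =
      (Fintype.card (η → Option α) / Fintype.card (ι → Option α) : ℝ) := by
    simpa using expect_mul_ind_range (subspace_injective V) 1
  have hsplit : 𝔼 x, ind (x ∈ D) = (𝔼 y, ind (y ∈ Set.range V)) * 𝔼 z, ind (z ∈ Z) +
      𝔼 y, 𝔼 z, ind (z ∈ remainder D (Set.range V) Z y) := by
    simpa [← mul_expect, ← expect_mul] using expect_mul_ind_eq_add_remainder hVZ 1
  have hrate : exhaustionRate α η ι ε ≤ (𝔼 y, ind (y ∈ Set.range V)) * 𝔼 z, ind (z ∈ Z) := by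
    rw [hrange]
    exact mul_le_mul_of_nonneg_left hV (by positivity)
  linarith

lemma InsensitiveBound.sum {c : ℝ} (hε : 0 < ε) (hs : 0 ≤ s) (hc₀ : 0 ≤ c) (hc₁ : c ≤ 1)
    (hc : c ≤ exhaustionRate α η ι ε)
    (hι : ∀ D : Set (ι → Option α), Insensitive a D → ε / 2 ≤ 𝔼 x, ind (x ∈ D) →
      ∃ V : Subspace η (Option α) ι, Set.range V ⊆ D)
    (hκ : InsensitiveBound a η κ ε s) : InsensitiveBound a η (ι ⊕ κ) ε ((1 - c) * s) := by
  intro g hg hgV D hD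
  have hD₀ : 0 ≤ 𝔼 x, ind (x ∈ D) := expect_nonneg fun x _ => ind_nonneg _
  rcases lt_or_ge (𝔼 x, ind (x ∈ D)) ε with hsparse | hdense
  · have : 0 ≤ (1 - c) * s * 𝔼 x, ind (x ∈ D) :=
      mul_nonneg (mul_nonneg (sub_nonneg.2 hc₁) hs) hD₀
    linarith [expect_mul_ind_le_expect_ind hg D]
  obtain ⟨V, Z, hZ, hVZ, hrem⟩ := exists_subspace_remainder hε hι hD hdense
  have hprod : 𝔼 z, (𝔼 y, g (Sum.elim y z) * ind (y ∈ Set.range V)) * ind (z ∈ Z) ≤ 0 :=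
    expect_le_of_forall_le le_rfl fun z => mul_nonpos_of_nonpos_of_nonneg
      (hgV.expect_mul_ind_range_nonpos V z) (ind_nonneg _)
  have hslice : ∀ y, 𝔼 z, g (Sum.elim y z) * ind (z ∈ remainder D (Set.range V) Z y) ≤
      ε + s * 𝔼 z, ind (z ∈ remainder D (Set.range V) Z y) := fun y =>
    hκ _ (fun z => hg _) (hgV.sumElim_right y) _ (hD.remainder hZ _ y)
  calc 𝔼 x, g x * ind (x ∈ D)
      ≤ 𝔼 y, 𝔼 z, g (Sum.elim y z) * ind (z ∈ remainder D (Set.range V) Z y) := by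
        rw [expect_mul_ind_eq_add_remainder hVZ]
        linarith
    _ ≤ 𝔼 y, (ε + s * 𝔼 z, ind (z ∈ remainder D (Set.range V) Z y)) :=
        expect_le_expect fun y _ => hslice y
    _ = ε + s * 𝔼 y, 𝔼 z, ind (z ∈ remainder D (Set.range V) Z y) := by
        rw [expect_add_distrib, Fintype.expect_const, mul_expect]
    _ ≤ ε + s * (𝔼 x, ind (x ∈ D) - c * 𝔼 x, ind (x ∈ D)) := by
        gcongr
        linarith [mul_le_of_le_one_right hc₀ (expect_ind_le_one (· ∈ D))]
    _ = ε + (1 - c) * s * 𝔼 x, ind (x ∈ D) := by ring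

lemma DHJ.exists_insensitiveBound (hα : DHJ α) (a : α) (η : Type) [Fintype η] [DecidableEq η]
    {ε : ℝ} (hε : 0 < ε) : ∃ (ι : Type) (_ : Fintype ι) (_ : DecidableEq ι),
      InsensitiveBound a η ι ε ε := by
  obtain ⟨ι, _, _, hι⟩ := hα.exists_subspace_subset_of_insensitive a η (half_pos hε)
  set c := min 1 (exhaustionRate α η ι ε)
  have hc₀ : 0 < c := lt_min one_pos (by unfold exhaustionRate; positivity)
  have hc₁ : c ≤ 1 := min_le_left _ _
  have hpow : ∀ t : ℕ, ∃ (κ : Type) (_ : Fintype κ) (_ : DecidableEq κ),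
      InsensitiveBound a η κ ε ((1 - c) ^ t) := fun t => by
    induction t with
    | zero => exact ⟨PEmpty, inferInstance, inferInstance, by
        simpa using insensitiveBound_one hε.le PEmpty⟩
    | succ t ih =>
      obtain ⟨κ, _, _, hκ⟩ := ih
      exact ⟨ι ⊕ κ, inferInstance, inferInstance, by
        simpa only [pow_succ'] using hκ.sum hε (pow_nonneg (sub_nonneg.2 hc₁) t) hc₀.le hc₁
          (min_le_right _ _) hι⟩
  obtain ⟨t, ht⟩ := exists_pow_lt_of_lt_one hε (sub_lt_self 1 hc₀)
  obtain ⟨κ, _, _, hκ⟩ := hpow t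
  refine ⟨κ, inferInstance, inferInstance, fun g hg hgV D hD => (hκ g hg hgV D hD).trans ?_⟩
  gcongr
  exact expect_nonneg fun x _ => ind_nonneg _

lemma DHJ.exists_expect_mul_ind_le (hα : DHJ α) (a : α) (η : Type) [Fintype η] [DecidableEq η]
    {ε : ℝ} (hε : 0 < ε) : ∃ (ι : Type) (_ : Fintype ι) (_ : DecidableEq ι),
      ∀ g : (ι → Option α) → ℝ, (∀ x, g x ≤ 1) →
      (∀ V : Subspace η (Option α) ι, 𝔼 x, g (V x) ≤ ε) →
      ∀ D : Set (ι → Option α), Insensitive a D → 𝔼 x, g x * ind (x ∈ D) ≤ 3 * ε := by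
  obtain ⟨ι, _, _, hι⟩ := hα.exists_insensitiveBound a η hε
  refine ⟨ι, inferInstance, inferInstance, fun g hg hgV D hD => ?_⟩
  have hshift := hι (fun x => g x - ε) (fun x => by linarith [hg x])
    (fun V => by rw [expect_sub_distrib, Fintype.expect_const]; linarith [hgV V]) D hD
  simp only [sub_mul, expect_sub_distrib, ← mul_expect] at hshift
  linarith [mul_le_of_le_one_right hε.le (expect_ind_le_one (· ∈ D))]

/-- The bound on the average of `g` itself is carried along for the induction. -/
lemma DHJ.exists_expect_mul_one_sub_ind_le (hα : DHJ α) (S : Finset α) (η : Type) [Fintype η]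
    [DecidableEq η] : ∀ ε : ℝ, 0 < ε → ∃ (ι : Type) (_ : Fintype ι) (_ : DecidableEq ι),
      ∀ g : (ι → Option α) → ℝ, (∀ x, g x ≤ 1) → NonposOnSubspaces η g →
      ∀ D : α → Set (ι → Option α), (∀ a, Insensitive a (D a)) →
      𝔼 x, g x ≤ ε ∧ 𝔼 x, g x * (1 - ind (∀ a ∈ S, x ∈ D a)) ≤ ε := by
  classical
  induction S using Finset.induction_on with
  | empty =>
    refine fun ε hε => ⟨η, inferInstance, inferInstance, fun g _ hgV D _ => ⟨?_, ?_⟩⟩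
    · exact (hgV default).trans hε.le
    · simpa [ind] using hε.le
  | insert a S _ ih =>
    intro ε hε
    obtain ⟨κ, _, _, hκ⟩ := ih (ε / 6) (by linarith)
    obtain ⟨ι, _, _, hι⟩ := hα.exists_expect_mul_ind_le a κ (ε := ε / 6) (by linarith)
    refine ⟨ι, inferInstance, inferInstance, fun g hg hgV D hD => ?_⟩
    have hsub : ∀ W : Subspace κ (Option α) ι, 𝔼 x, g (W x) ≤ ε / 6 ∧
        𝔼 x, g (W x) * (1 - ind (∀ b ∈ S, W x ∈ D b)) ≤ ε / 6 := fun W =>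
      hκ _ (fun x => hg _) (hgV.comp_subspace W) _ fun b => (hD b).comp_subspace W
    have hle : ∀ x, g x * (1 - ind (∀ b ∈ S, x ∈ D b)) ≤ 1 := fun x => by
      nlinarith [hg x, ind_nonneg (∀ b ∈ S, x ∈ D b), ind_le_one (∀ b ∈ S, x ∈ D b)]
    refine ⟨?_, ?_⟩
    · have huniv := hι g hg (fun W => (hsub W).1) Set.univ fun _ _ _ _ => trivial
      simp only [Set.mem_univ, ind_of_true, mul_one] at huniv
      linarith
    · have hcompl := hι g hg (fun W => (hsub W).1) (D a)ᶜ (hD a).compl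
      have hmem := hι _ hle (fun W => (hsub W).2) (D a) (hD a)
      calc 𝔼 x, g x * (1 - ind (∀ b ∈ insert a S, x ∈ D b))
          = 𝔼 x, g x * ind (x ∈ (D a)ᶜ) +
              𝔼 x, g x * (1 - ind (∀ b ∈ S, x ∈ D b)) * ind (x ∈ D a) := by
            rw [← expect_add_distrib]
            refine expect_congr rfl fun x _ => ?_
            rw [forall_mem_insert, ind_and, Set.mem_compl_iff, ind_not]
            ring
        _ ≤ ε := by linarith

end Exhaustion

/-! ### Enlarging the alphabet by one letter -/

section LineFree

/-- A set of words is line-free if it contains no combinatorial line. -/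
def LineFree {ι β : Type*} (A : Set (ι → β)) : Prop := ∀ l : Line β ι, ¬Set.range l ⊆ A

namespace LineFree

variable {ι κ β : Type*}

lemma comp_subspace {A : Set (ι → β)} (hA : LineFree A) (V : Subspace κ β ι) :
    LineFree {x | V x ∈ A} := by
  refine fun l hl => hA (lineInSubspace V l) (Set.range_subset_iff.2 fun b => ?_)
  rw [lineInSubspace_apply]
  exact hl (Set.mem_range_self b)

variable {A : Set (ι ⊕ κ → β)}

lemma sumElim_left (hA : LineFree A) (z : κ → β) : LineFree {y : ι → β | Sum.elim y z ∈ A} := by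
  refine fun l hl => hA (l.horizontal z) (Set.range_subset_iff.2 fun b => ?_)
  rw [Line.horizontal_apply]
  exact hl (Set.mem_range_self b)

lemma sumElim_right (hA : LineFree A) (y : ι → β) : LineFree {z : κ → β | Sum.elim y z ∈ A} := by
  refine fun l hl => hA (l.vertical y) (Set.range_subset_iff.2 fun b => ?_)
  rw [Line.vertical_apply]
  exact hl (Set.mem_range_self b)

end LineFree

lemma HJDensity.exists_forall_lineFree {β : Type u} [Fintype β] {δ : ℝ} (h : HJDensity β δ) :
    ∃ (ι : Type) (_ : Fintype ι) (_ : DecidableEq ι), ∀ A : Set (ι → β), LineFree A →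
      𝔼 x, ind (x ∈ A) < δ := by
  obtain ⟨ι, _, _, hι⟩ := h
  refine ⟨ι, inferInstance, inferInstance, fun A hA => ?_⟩
  by_contra! hdens
  obtain ⟨l, hl⟩ := hι A hdens
  exact hA l hl

lemma exists_critical_density {β : Type u} [Fintype β] (h : ¬DHJ β) :
    ∃ d : ℝ, 0 < d ∧ (∀ δ, d < δ → HJDensity β δ) ∧ ∀ δ, δ < d → ¬HJDensity β δ := by
  obtain ⟨δ₀, hδ₀, hnot⟩ : ∃ δ : ℝ, 0 < δ ∧ ¬HJDensity β δ := by simpa [DHJ] using h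
  have hlower : δ₀ ∈ lowerBounds {δ | HJDensity β δ} := fun δ hδ =>
    le_of_not_gt fun hlt => hnot (HJDensity.mono hδ hlt.le)
  have hne : {δ | HJDensity β δ}.Nonempty := ⟨2, hjDensity_of_one_lt one_lt_two⟩
  refine ⟨sInf {δ | HJDensity β δ}, hδ₀.trans_le (le_csInf hne hlower), fun δ hδ => ?_,
    fun δ hδ hmem => hδ.not_ge (csInf_le ⟨δ₀, hlower⟩ hmem)⟩
  obtain ⟨δ', hδ', hlt⟩ := exists_lt_of_csInf_lt hne hδ
  exact HJDensity.mono hδ' hlt.le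

/-- The sets are slices of one line-free set of almost critical density. As they are also indexed by
words, no point can lie in much more than the critical proportion of them. -/
lemma exists_lineFree_family {β : Type u} [Fintype β] {d : ℝ} (hd : ∀ δ, d < δ → HJDensity β δ)
    (hd' : ∀ δ, δ < d → ¬HJDensity β δ) (ι : Type) [Finite ι] {τ : ℝ} (hτ : 0 < τ) :
    ∃ (Z : Type u) (_ : Fintype Z) (A : Z → Set (ι → β)),
      (∀ z, LineFree (A z)) ∧ ∀ x, d - τ ≤ 𝔼 z, ind (x ∈ A z) := by
  classical
  have := Fintype.ofFinite ι
  set N : ℝ := ((Fintype.card (ι → β) : ℕ) : ℝ)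
  set γ := τ / (2 * N + 1)
  have hγ₀ : 0 < γ := by positivity
  have hNγ : (2 * N + 1) * γ = τ := mul_div_cancel₀ τ (by positivity)
  obtain ⟨ρ, _, _, hρ⟩ := (hd (d + γ) (by linarith)).exists_forall_lineFree
  obtain ⟨A, hdens, hA⟩ : ∃ A : Set (ι ⊕ ρ → β), d - γ ≤ 𝔼 x, ind (x ∈ A) ∧ LineFree A := by
    by_contra! hcon
    refine hd' (d - γ) (by linarith) ⟨ι ⊕ ρ, inferInstance, inferInstance, fun A hdens => ?_⟩
    simpa [LineFree] using hcon A hdens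
  refine ⟨ρ → β, inferInstance, fun z => {y | Sum.elim y z ∈ A}, hA.sumElim_left, fun y => ?_⟩
  rw [expect_sumElim, expect_comm] at hdens
  have hy := sub_card_mul_le_of_le_expect (fun y => (hρ _ (hA.sumElim_right y)).le) hdens y
  refine le_trans ?_ hy
  linarith

end LineFree

section LineFreeBound

variable {α : Type u} [Fintype α]

/-- A line-free set that is disjoint from an intersection of insensitive sets, one for each letter,
has relative density at most `δ` in the complement of the intersection, up to an error `ε`. -/
def LineFreeBound (α : Type u) [Fintype α] (κ : Type) [Fintype κ] [DecidableEq κ] (δ ε : ℝ) :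
    Prop :=
  ∀ E : Set (κ → Option α), LineFree E →
    ∀ D : α → Set (κ → Option α), (∀ a, Insensitive a (D a)) → (∀ y ∈ E, ¬∀ a, y ∈ D a) →
      𝔼 y, ind (y ∈ E) ≤ δ * (1 - 𝔼 y, ind (∀ a, y ∈ D a)) + ε

lemma DHJ.exists_lineFreeBound (hα : DHJ α) {δ ε : ℝ} (hδ : HJDensity (Option α) δ) (hδ₀ : 0 ≤ δ)
    (hε : 0 < ε) : ∃ (κ : Type) (_ : Fintype κ) (_ : DecidableEq κ), LineFreeBound α κ δ ε := by
  obtain ⟨η, _, _, hη⟩ := hδ.exists_forall_lineFree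
  obtain ⟨κ, _, _, hκ⟩ := hα.exists_expect_mul_one_sub_ind_le univ η ε hε
  refine ⟨κ, inferInstance, inferInstance, fun E hE D hD hED => ?_⟩
  have hsub : NonposOnSubspaces η fun y => ind (y ∈ E) - δ := fun V => by
    rw [expect_sub_distrib, Fintype.expect_const, sub_nonpos]
    exact (hη _ (hE.comp_subspace V)).le
  have hbound := (hκ _ (fun y => by linarith [ind_le_one (y ∈ E)]) hsub D hD).2
  have hpoint : ∀ y, (ind (y ∈ E) - δ) * (1 - ind (∀ a ∈ univ, y ∈ D a)) =
      ind (y ∈ E) - δ * (1 - ind (∀ a, y ∈ D a)) := fun y => by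
    simp only [mem_univ, forall_true_left]
    by_cases hy : y ∈ E
    · rw [ind_of_false (hED y hy)]
      ring
    · rw [ind_of_false hy]
      ring
  simp only [hpoint, expect_sub_distrib, ← mul_expect, Fintype.expect_const] at hbound
  linarith

end LineFreeBound

section Blocks

variable {η κ α : Type*}

/-- The word consisting, for each `e`, of a block with coordinates `Option κ`, which has the letter
`w e` at `none` and elsewhere the word `σ e` with each letter `none` replaced by `w e`. -/
def blockWord (σ : η → κ → Option α) (w : η → Option α) : η × Option κ → Option α :=
  fun p => p.2.elim (w p.1) fun j => (σ p.1 j).or (w p.1)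

/-- The combinatorial line that completes the words `blockWord σ (fun e => some (L a e))` by the
point whose word over `Option α` is the word of `L`, with its wildcards as the letter `none`. -/
def blockLine (σ : η → κ → Option α) (L : Line α η) : Line (Option α) (η × Option κ) where
  idxFun p := (blockWord σ L.idxFun p).map some
  proper := let ⟨e, he⟩ := L.proper; ⟨(e, none), by simp [blockWord, he]⟩

lemma blockLine_none (σ : η → κ → Option α) (L : Line α η) :
    blockLine σ L none = blockWord σ L.idxFun := by
  funext p
  cases h : blockWord σ L.idxFun p <;> simp [blockLine, Line.coe_apply, h]

lemma blockLine_some (σ : η → κ → Option α) (L : Line α η) (a : α) :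
    blockLine σ L (some a) = blockWord σ fun e => some (L a e) := by
  funext ⟨e, j⟩
  cases j with
  | none => cases h : L.idxFun e <;> simp [blockLine, blockWord, Line.coe_apply, h]
  | some j =>
    cases h : L.idxFun e <;> cases h' : σ e j <;>
      simp [blockLine, blockWord, Line.coe_apply, h, h']

lemma LineFree.blockWord_notMem {A : Set (η × Option κ → Option α)} (hA : LineFree A)
    (σ : η → κ → Option α) (L : Line α η)
    (hL : ∀ a, blockWord σ (fun e => some (L a e)) ∈ A) : blockWord σ L.idxFun ∉ A := by
  refine fun hend => hA (blockLine σ L) (Set.range_subset_iff.2 fun b => ?_)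
  cases b with
  | none => rwa [blockLine_none]
  | some a => rw [blockLine_some]; exact hL a

variable [DecidableEq η]

/-- The subspace of the words `blockWord σ w` in which the block `e`, where `w e = none`, varies. -/
def blockSubspace (σ : η → κ → Option α) (w : η → Option α) (e : η) :
    Subspace κ (Option α) (η × Option κ) where
  idxFun p := if p.1 = e then p.2.elim (Sum.inl none) Sum.inr else Sum.inl (blockWord σ w p)
  proper j := ⟨(e, some j), by simp⟩

lemma blockSubspace_apply (σ : η → κ → Option α) {w : η → Option α} {e : η} (he : w e = none)
    (y : κ → Option α) : blockSubspace σ w e y = blockWord (Function.update σ e y) w := by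
  funext ⟨i, j⟩
  by_cases hi : i = e
  · subst hi
    cases j <;> simp [blockSubspace, Subspace.coe_apply, blockWord, he]
  · simp [blockSubspace, Subspace.coe_apply, blockWord, hi]

lemma insensitive_blockWord_update (A : Set (η × Option κ → Option α)) (σ : η → κ → Option α)
    {w : η → Option α} {e : η} {a : α} (he : w e = some a) :
    Insensitive a {y | blockWord (Function.update σ e y) w ∈ A} := by
  intro x y hxy hx
  rw [Set.mem_ofPred_eq] at hx ⊢
  convert hx using 1
  funext ⟨i, j⟩
  by_cases hi : i = e
  · subst hi
    cases j with
    | none => rfl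
    | some j => simpa [blockWord, he, Option.or_some] using (hxy j).symm
  · simp [blockWord, hi]

end Blocks

section InductiveStep

variable {α : Type u} [Fintype α] {η κ : Type} [Fintype η] [DecidableEq η] [Fintype κ]
  [DecidableEq κ]

lemma LineFreeBound.expect_blockWord_le {δ ε : ℝ} (h : LineFreeBound α κ δ ε)
    {A : Set (η × Option κ → Option α)} (hA : LineFree A) (L : Line α η) :
    𝔼 σ, ind (blockWord σ L.idxFun ∈ A) ≤
      δ * (1 - 𝔼 σ, ind (∀ a, blockWord σ (fun e => some (L a e)) ∈ A)) + ε := by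
  obtain ⟨e, he⟩ := L.proper
  have hblock : ∀ σ : η → κ → Option α,
      𝔼 y, ind (blockWord (Function.update σ e y) L.idxFun ∈ A) ≤ δ * (1 - 𝔼 y,
        ind (∀ a, blockWord (Function.update σ e y) (fun e => some (L a e)) ∈ A)) + ε := fun σ => by
    simp only [← blockSubspace_apply σ he]
    refine h _ (hA.comp_subspace _) _
      (fun a => insensitive_blockWord_update A σ (by rw [L.apply_none a e he])) fun y hy hall => ?_
    rw [Set.mem_ofPred_eq, blockSubspace_apply σ he] at hy
    exact hA.blockWord_notMem _ L hall hy
  calc 𝔼 σ, ind (blockWord σ L.idxFun ∈ A)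
      = 𝔼 σ, 𝔼 y, ind (blockWord (Function.update σ e y) L.idxFun ∈ A) :=
        (expect_update e _).symm
    _ ≤ 𝔼 σ, (δ * (1 - 𝔼 y, ind (∀ a,
          blockWord (Function.update σ e y) (fun e => some (L a e)) ∈ A)) + ε) :=
        expect_le_expect fun σ _ => hblock σ
    _ = δ * (1 - 𝔼 σ, ind (∀ a, blockWord σ (fun e => some (L a e)) ∈ A)) + ε := by
        rw [expect_add_distrib, ← mul_expect, expect_sub_distrib, Fintype.expect_const,
          Fintype.expect_const, expect_update e
            fun σ => ind (∀ a, blockWord σ (fun e => some (L a e)) ∈ A)]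

lemma exists_line_le_expect_ind_blockWord [Nonempty α] {δ : ℝ} (hδ : 0 < δ)
    (hη : ∀ A : Set (η → α), δ / 2 ≤ 𝔼 w, ind (w ∈ A) → ∃ L : Line α η, Set.range L ⊆ A)
    {Z : Type*} [Fintype Z] {A : Z → Set (η × Option κ → Option α)}
    (hA : ∀ x, δ ≤ 𝔼 z, ind (x ∈ A z)) :
    ∃ L : Line α η, δ / 2 / (Nat.card (Line α η) + 1) ≤
      𝔼 z, 𝔼 σ, ind (∀ a, blockWord σ (fun e => some (L a e)) ∈ A z) := by
  have hdens : δ ≤ 𝔼 p : Z × (η → κ → Option α),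
      𝔼 w : η → α, ind (blockWord p.2 (fun e => some (w e)) ∈ A p.1) := by
    rw [expect_comm]
    refine le_expect univ_nonempty fun w _ => ?_
    rw [← univ_product_univ, expect_product, expect_comm]
    exact le_expect univ_nonempty fun σ _ => hA (blockWord σ fun e => some (w e))
  obtain ⟨L, hL⟩ := exists_le_expect_ind_subset (S := fun L : Line α η => Set.range L)
    (A := fun p : Z × (η → κ → Option α) => {w | blockWord p.2 (fun e => some (w e)) ∈ A p.1})
    hδ hdens fun p => hη _
  refine ⟨L, hL.trans_eq ?_⟩
  simp only [Set.range_subset_iff, Set.mem_ofPred_eq]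
  rw [← univ_product_univ, expect_product]

theorem DHJ.option (hα : DHJ α) : DHJ (Option α) := by
  cases isEmpty_or_nonempty α
  · exact dhj_of_subsingleton
  by_contra hnot
  obtain ⟨d, hd₀, hd, hd'⟩ := exists_critical_density hnot
  obtain ⟨η, _, _, hη⟩ := hα (d / 2 / 2) (by positivity)
  set θ : ℝ := d / 2 / 2 / (Nat.card (Line α η) + 1)
  have hθ₀ : 0 < θ := by positivity
  set τ : ℝ := min (θ * d / 4) (d / 4)
  have hτ₀ : 0 < τ := lt_min (by positivity) (by positivity)
  have hτθ : τ ≤ θ * d / 4 := min_le_left _ _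
  have hτd : τ ≤ d / 4 := min_le_right _ _
  obtain ⟨κ, _, _, hκ⟩ := hα.exists_lineFreeBound (hd (d + τ) (by linarith)) (by linarith) hτ₀
  obtain ⟨Z, _, A, hA, hdens⟩ := exists_lineFree_family hd hd' (η × Option κ) hτ₀
  obtain ⟨L, hL⟩ := exists_line_le_expect_ind_blockWord (half_pos hd₀) hη
    fun x => (by linarith : d / 2 ≤ d - τ).trans (hdens x)
  have hupper : 𝔼 z, 𝔼 σ, ind (blockWord σ L.idxFun ∈ A z) ≤ (d + τ) * (1 - θ) + τ :=
    calc 𝔼 z, 𝔼 σ, ind (blockWord σ L.idxFun ∈ A z)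
        ≤ 𝔼 z, ((d + τ) * (1 - 𝔼 σ, ind (∀ a, blockWord σ (fun e => some (L a e)) ∈ A z)) + τ) :=
          expect_le_expect fun z _ => hκ.expect_blockWord_le (hA z) L
      _ = (d + τ) * (1 - 𝔼 z, 𝔼 σ, ind (∀ a, blockWord σ (fun e => some (L a e)) ∈ A z)) + τ := by
          have : Nonempty Z := nonempty_of_pos_le_expect hθ₀ hL
          rw [expect_add_distrib, ← mul_expect, expect_sub_distrib, Fintype.expect_const,
            Fintype.expect_const]
      _ ≤ (d + τ) * (1 - θ) + τ := by gcongr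
  have hlower : d - τ ≤ 𝔼 z, 𝔼 σ, ind (blockWord σ L.idxFun ∈ A z) := by
    rw [expect_comm]
    exact le_expect univ_nonempty fun σ _ => hdens _
  nlinarith

theorem densityHalesJewett (α : Type u) [Fintype α] : DHJ α := by
  refine Fintype.induction_empty_option (P := fun α _ => DHJ α) ?of_equiv ?empty ?option α
  case of_equiv =>
    intro _ β _ e hα
    let := Fintype.ofEquiv β e.symm
    exact hα.congr e
  case empty => exact dhj_of_subsingleton
  case option =>
    intro _ _ hα
    exact hα.option

end InductiveStep

/-! ### Progressions in finite abelian groups -/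

section Progressions

variable {J : Type*} {ι : Type} [Fintype ι] {G H : Type*} [AddCommGroup G] [AddCommGroup H]

/-- The sum of the values of `r : ι → H` at the wildcards of the line `L`. It is the difference of
the progression into which a random linear map takes `L`. -/
def wildcardSum (H : Type*) [AddCommGroup H] (L : Line J ι) : (ι → H) →+ H :=
  ∑ i, (L.idxFun i).elim (Pi.evalAddMonoidHom (fun _ => H) i) 0

lemma wildcardSum_surjective (H : Type*) [AddCommGroup H] (L : Line J ι) :
    Function.Surjective (wildcardSum H L) := by
  classical
  intro h
  obtain ⟨i, hi⟩ := L.proper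
  refine ⟨Pi.single i h, ?_⟩
  rw [wildcardSum, AddMonoidHom.finsetSum_apply, Fintype.sum_eq_single i fun i' hi' => ?_, hi]
  · simp
  · cases h : L.idxFun i' <;> simp [hi']

lemma sum_line_apply (φ : J → H →+ G) (L : Line J ι) (j : J) (r : ι → H) :
    ∑ i, φ (L j i) (r i) =
      ∑ i, (L.idxFun i).elim 0 (fun a => φ a (r i)) + φ j (wildcardSum H L r) := by
  rw [wildcardSum, AddMonoidHom.finsetSum_apply, map_sum, ← sum_add_distrib]
  refine sum_congr rfl fun i _ => ?_
  cases h : L.idxFun i <;> simp [Line.coe_apply, h]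

variable [Fintype G] [Fintype H]

lemma expect_comp_surjective {ψ : G →+ H} (hψ : Function.Surjective ψ) (f : H → ℝ) :
    𝔼 g, f (ψ g) = 𝔼 h, f h := by
  have htranslate : ∀ h, 𝔼 g, f (h + ψ g) = 𝔼 g, f (ψ g) := fun h => by
    obtain ⟨g₀, rfl⟩ := hψ h
    exact Fintype.expect_equiv (Equiv.addLeft g₀) _ _ fun g => by simp
  calc 𝔼 g, f (ψ g) = 𝔼 h, 𝔼 g, f (h + ψ g) := by
        simp only [htranslate, Fintype.expect_const]
    _ = 𝔼 g, 𝔼 h, f (h + ψ g) := expect_comm ..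
    _ = 𝔼 _g : G, 𝔼 h, f h := expect_congr rfl fun g _ =>
        Fintype.expect_equiv (Equiv.addRight (ψ g)) _ _ fun _ => rfl
    _ = 𝔼 h, f h := Fintype.expect_const _

lemma expect_ind_line_eq (φ : J → H →+ G) (S : Set G) [DecidableEq ι] (L : Line J ι) :
    𝔼 r : ι → H, 𝔼 x, ind (∀ j, x + ∑ i, φ (L j i) (r i) ∈ S) =
      𝔼 d, 𝔼 x, ind (∀ j, x + φ j d ∈ S) := by
  rw [← expect_comp_surjective (wildcardSum_surjective H L)]
  refine expect_congr rfl fun r _ => ?_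
  refine Fintype.expect_equiv
    (Equiv.addRight (∑ i, (L.idxFun i).elim 0 fun a => φ a (r i))) _ _ fun x => ?_
  simp only [sum_line_apply, Equiv.coe_addRight, add_assoc]

end Progressions

theorem exists_pos_le_expect_ind_progression (J : Type u) [Finite J] [Nonempty J] {δ : ℝ}
    (hδ : 0 < δ) : ∃ θ : ℝ, 0 < θ ∧ ∀ (G : Type*) (H : Type*) [AddCommGroup G] [Fintype G]
      [AddCommGroup H] [Fintype H] (φ : J → H →+ G) (S : Set G), δ ≤ 𝔼 x, ind (x ∈ S) →
        θ ≤ 𝔼 d, 𝔼 x, ind (∀ j, x + φ j d ∈ S) := by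
  have := Fintype.ofFinite J
  obtain ⟨ι, _, _, hι⟩ := densityHalesJewett J (δ / 2) (half_pos hδ)
  refine ⟨δ / 2 / (Nat.card (Line J ι) + 1), by positivity, fun G H _ _ _ _ φ S hS => ?_⟩
  have hdens : δ ≤ 𝔼 p : (ι → H) × G, 𝔼 w : ι → J, ind (p.2 + ∑ i, φ (w i) (p.1 i) ∈ S) := by
    rw [expect_comm]
    refine le_expect univ_nonempty fun w _ => ?_
    rw [← univ_product_univ, expect_product]
    refine le_expect univ_nonempty fun r _ => hS.trans_eq ?_
    exact (Fintype.expect_equiv (Equiv.addRight (∑ i, φ (w i) (r i))) _ _ fun _ => rfl).symm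
  obtain ⟨L, hL⟩ := exists_le_expect_ind_subset (S := fun L : Line J ι => Set.range L)
    (A := fun p : (ι → H) × G => {w | p.2 + ∑ i, φ (w i) (p.1 i) ∈ S}) hδ hdens fun p => hι _
  refine hL.trans_eq ?_
  simp only [Set.range_subset_iff, Set.mem_ofPred_eq]
  rw [← univ_product_univ, expect_product, expect_ind_line_eq]

/-- The homomorphisms `φ j` are arbitrary: they need not be multiples of a single one, so that the
multidimensional Szemerédi theorem is included. -/
theorem szemeredi_weighted_general (J : Type u) [Fintype J] [Nonempty J] {δ : ℝ} (hδ : 0 < δ) :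
    ∃ c : ℝ, 0 < c ∧ ∀ (G : Type*) (H : Type*) [AddCommGroup G] [Fintype G] [AddCommGroup H]
      [Fintype H] (φ : J → H →+ G) (f : G → ℝ), (∀ x, 0 ≤ f x ∧ f x ≤ 1) → δ ≤ avg f →
        c ≤ avg fun p : G × H => ∏ j, f (p.1 + φ j p.2) := by
  obtain ⟨θ, hθ, hprog⟩ := exists_pos_le_expect_ind_progression J (half_pos hδ)
  refine ⟨(δ / 2) ^ Fintype.card J * θ, by positivity, fun G H _ _ _ _ φ f hf hmean => ?_⟩
  have hdens : δ / 2 ≤ 𝔼 x, ind (δ / 2 ≤ f x) :=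
    half_le_expect_ind (fun x => (hf x).2) hδ.le (avg_eq_expect f ▸ hmean)
  calc (δ / 2) ^ Fintype.card J * θ
      ≤ (δ / 2) ^ Fintype.card J * 𝔼 d, 𝔼 x, ind (∀ j, δ / 2 ≤ f (x + φ j d)) := by
        gcongr
        exact hprog G H φ {x | δ / 2 ≤ f x} hdens
    _ = 𝔼 p : G × H, (δ / 2) ^ Fintype.card J * ind (∀ j, δ / 2 ≤ f (p.1 + φ j p.2)) := by
        rw [← univ_product_univ, expect_product, expect_comm, mul_expect]
        simp only [mul_expect]
    _ ≤ 𝔼 p : G × H, ∏ j, f (p.1 + φ j p.2) := expect_le_expect fun p _ =>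
        pow_card_mul_ind_le_prod (fun _ => (hf _).1) (half_pos hδ).le
    _ = avg fun p : G × H => ∏ j, f (p.1 + φ j p.2) := (avg_eq_expect _).symm

end

/-- **Szemerédi's theorem, weighted version.**
For every `k ≥ 3` and `δ > 0` there exist `c > 0` and `N₀` such that for every `N ≥ N₀`
and every `f : ZMod N → [0,1]` with `E[f] ≥ δ`, one has
`E[f(x) f(x+d) ⋯ f(x+(k-1)d) | x, d ∈ ZMod N] ≥ c`. -/
theorem szemeredi_weighted (k : ℕ) (hk : 3 ≤ k) (δ : ℝ) (hδ : 0 < δ) :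
    ∃ c : ℝ, 0 < c ∧ ∃ N₀ : ℕ, ∀ N : ℕ, N₀ ≤ N → ∀ [NeZero N],
      ∀ f : ZMod N → ℝ, (∀ x, 0 ≤ f x ∧ f x ≤ 1) → δ ≤ avg f →
      c ≤ avg (fun p : ZMod N × ZMod N =>
        ∏ i ∈ Finset.range k, f (p.1 + (i : ZMod N) * p.2)) := by
  have : NeZero k := ⟨by omega⟩
  obtain ⟨c, hc, h⟩ := szemeredi_weighted_general (Fin k) hδ
  refine ⟨c, hc, 0, fun N _ _ f hf hmean => ?_⟩
  simpa [Finset.prod_range] using h (ZMod N) (ZMod N) (fun i => AddMonoidHom.mulLeft i) f hf hmean
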